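/- Let p and q be integers with 2 ≤ p ≤ q and m = gcd(p,q) < p (i.e. p does not divide q), and set ν = (p−1)(q−1) and T = {(p,0),(0,q)}. Then for every finite set P ⊆ ℕ², either ν(T ∪ P) = ν or ν(T ∪ P) ≤ ν − m; in other words, no integer strictly between ν − m and ν is attainable from T (the first jump of Newton numbers equals m). -/

import Mathlib

open Pointwise MeasureTheory

/-- The Newton polyhedron `Γ₊(T)`: the Minkowski sum of the convex hull of the
(real images of the) lattice points of `T` with the nonnegative quadrant. -/
noncomputable def GammaPlus (T : Finset (ℕ × ℕ)) : Set (ℝ × ℝ) :=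
  convexHull ℝ ((fun v : ℕ × ℕ => ((v.1 : ℝ), (v.2 : ℝ))) '' (T : Set (ℕ × ℕ))) +
    {v : ℝ × ℝ | 0 ≤ v.1 ∧ 0 ≤ v.2}

/-- `a(T)`: the smallest `x` with `(x,0) ∈ Γ₊(T)`. -/
noncomputable def axisA (T : Finset (ℕ × ℕ)) : ℝ :=
  sInf {x : ℝ | (x, (0 : ℝ)) ∈ GammaPlus T}

/-- `b(T)`: the smallest `y` with `(0,y) ∈ Γ₊(T)`. -/
noncomputable def axisB (T : Finset (ℕ × ℕ)) : ℝ :=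
  sInf {y : ℝ | ((0 : ℝ), y) ∈ GammaPlus T}

/-- `S(T)`: the Lebesgue area of the part of the nonnegative quadrant not in `Γ₊(T)`. -/
noncomputable def areaS (T : Finset (ℕ × ℕ)) : ℝ :=
  (volume ({v : ℝ × ℝ | 0 ≤ v.1 ∧ 0 ≤ v.2} \ GammaPlus T)).toReal

/-- The Newton number `ν(T) = 2 S(T) - a(T) - b(T) + 1`. -/
noncomputable def newtonNumber (T : Finset (ℕ × ℕ)) : ℝ :=
  2 * areaS T - axisA T - axisB T + 1

/-- An integer `n` is attainable from `T` if `n = ν(T ∪ P)` for some finite `P ⊆ ℕ²`. -/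
def Attainable (T : Finset (ℕ × ℕ)) (n : ℤ) : Prop :=
  ∃ P : Finset (ℕ × ℕ), (n : ℝ) = newtonNumber (T ∪ P)

/-!
Write `a` and `b` for the axis intercepts of `T`; if one of them is `0`, both are and `ν(T) = 1`.
The segment from `(a, 0)` to `(0, b)` shows that `ν(T) ≤ (a - 1) (b - 1)`, so for positive `a`, `b`
with `a < p` or `b < q` the value drops by at least `min (p - 1) (q - 1)`. If `a = p` and `b = q`,
then `ν(T)` can only drop when some `(i, j) ∈ T` lies strictly below that segment; the broken line
through `(p, 0)`, `(i, j)`, `(0, q)` then decreases twice the area by at least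
`p q - (q i + p j)`, a positive multiple of `gcd(p, q)`. When neither of `p`, `q` divides the other,
`gcd(p, q)` is at most `min (p - 1) (q - 1)`.
-/

lemma measure_prod_setOf_mem_Ico {α : Type*} [MeasurableSpace α] {μ : Measure α}
    {s : Set α} {f : α → ℝ} (hs : MeasurableSet s) (hf : Measurable f) (hint : IntegrableOn f s μ)
    (hf₀ : ∀ x ∈ s, 0 ≤ f x) :
    μ.prod volume {v : α × ℝ | v.1 ∈ s ∧ v.2 ∈ Set.Ico 0 (f v.1)} =
      ENNReal.ofReal (∫ x in s, f x ∂μ) := by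
  have volume_slice (x : α) :
      volume (Prod.mk x ⁻¹' {v : α × ℝ | v.1 ∈ s ∧ v.2 ∈ Set.Ico 0 (f v.1)}) =
        s.indicator (fun x => ENNReal.ofReal (f x)) x := by
    by_cases h : x ∈ s
    · simp [Set.preimage_ofPred_eq, h, -Set.mem_Ico]
    · simp [Set.preimage_ofPred_eq, h]
  rw [Measure.prod_apply (measurableSet_region_between_co measurable_const hf hs)]
  simp_rw [volume_slice]
  rw [lintegral_indicator hs,
    ofReal_integral_eq_lintegral_ofReal hint (ae_restrict_of_forall_mem hs hf₀)]

section Trapezoid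

variable {x₁ x₂ y₁ y₂ : ℝ}

/-- The trapezoid below the segment from `(x₁, y₁)` to `(x₂, y₂)`, without that segment. With the
denominator `x₂ - x₁` cleared from the equation of the segment, it is empty when `x₁ = x₂`. -/
def trapezoid (x₁ x₂ y₁ y₂ : ℝ) : Set (ℝ × ℝ) :=
  {v | v.1 ∈ Set.Icc x₁ x₂ ∧ 0 ≤ v.2 ∧ (x₂ - x₁) * v.2 < y₁ * (x₂ - v.1) + y₂ * (v.1 - x₁)}

lemma trapezoid_eq_setOf_mem_Ico (hx : x₁ < x₂) :
    trapezoid x₁ x₂ y₁ y₂ = {v | v.1 ∈ Set.Icc x₁ x₂ ∧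
      v.2 ∈ Set.Ico 0 ((y₁ * (x₂ - v.1) + y₂ * (v.1 - x₁)) / (x₂ - x₁))} := by
  simp only [trapezoid, Set.mem_Ico, lt_div_iff₀' (sub_pos.2 hx)]

lemma integral_segment (hx : x₁ ≠ x₂) :
    ∫ x in x₁..x₂, (y₁ * (x₂ - x) + y₂ * (x - x₁)) / (x₂ - x₁) = (x₂ - x₁) * (y₁ + y₂) / 2 := by
  have hsub : IntervalIntegrable (fun x : ℝ => y₁ * (x₂ - x)) volume x₁ x₂ :=
    Continuous.intervalIntegrable (by fun_prop) _ _
  have hsub' : IntervalIntegrable (fun x : ℝ => y₂ * (x - x₁)) volume x₁ x₂ :=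
    Continuous.intervalIntegrable (by fun_prop) _ _
  rw [intervalIntegral.integral_div, intervalIntegral.integral_add hsub hsub',
    intervalIntegral.integral_const_mul, intervalIntegral.integral_const_mul,
    intervalIntegral.integral_comp_sub_left (fun x => x),
    intervalIntegral.integral_comp_sub_right (fun x => x), integral_id, integral_id]
  have hne : x₂ - x₁ ≠ 0 := sub_ne_zero.2 hx.symm
  field_simp
  ring

lemma volume_trapezoid (hx : x₁ ≤ x₂) (hy₁ : 0 ≤ y₁) (hy₂ : 0 ≤ y₂) :
    volume (trapezoid x₁ x₂ y₁ y₂) = ENNReal.ofReal ((x₂ - x₁) * (y₁ + y₂) / 2) := by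
  rcases hx.eq_or_lt with rfl | hlt
  · have hempty : trapezoid x₁ x₁ y₁ y₂ = ∅ := by
      refine Set.eq_empty_of_forall_notMem fun v ⟨⟨h₁, h₂⟩, _, hlt⟩ => ?_
      simp [h₂.antisymm h₁] at hlt
    simp [hempty]
  · have hcont : Continuous fun x => (y₁ * (x₂ - x) + y₂ * (x - x₁)) / (x₂ - x₁) := by fun_prop
    rw [trapezoid_eq_setOf_mem_Ico hlt, Measure.volume_eq_prod,
      measure_prod_setOf_mem_Ico measurableSet_Icc hcont.measurable
        hcont.continuousOn.integrableOn_Icc, integral_Icc_eq_integral_Ioc,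
      ← intervalIntegral.integral_of_le hx, integral_segment hlt.ne]
    rintro x ⟨h₁, h₂⟩
    have := sub_nonneg.2 h₁
    have := sub_nonneg.2 h₂
    have := sub_nonneg.2 hx
    positivity

end Trapezoid

section ConvexUpperSet

variable {Γ : Set (ℝ × ℝ)}

lemma mem_trapezoid_of_notMem (hconv : Convex ℝ Γ) (hup : IsUpperSet Γ) {x₁ x₂ y₁ y₂ : ℝ}
    (hx : x₁ < x₂) (h₁ : (x₁, y₁) ∈ Γ) (h₂ : (x₂, y₂) ∈ Γ) {v : ℝ × ℝ}
    (hv : v ∉ Γ) (hv₁ : v.1 ∈ Set.Icc x₁ x₂) (hv₂ : 0 ≤ v.2) : v ∈ trapezoid x₁ x₂ y₁ y₂ := by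
  refine ⟨hv₁, hv₂, lt_of_not_ge fun hle => hv ?_⟩
  have hpos : 0 < x₂ - x₁ := sub_pos.2 hx
  have hcomb := hconv h₁ h₂ (a := (x₂ - v.1) / (x₂ - x₁)) (b := (v.1 - x₁) / (x₂ - x₁))
    (div_nonneg (sub_nonneg.2 hv₁.2) hpos.le) (div_nonneg (sub_nonneg.2 hv₁.1) hpos.le)
    (by field_simp; ring)
  refine hup (Prod.mk_le_mk.2 ⟨le_of_eq ?_, ?_⟩) hcomb
  · change (x₂ - v.1) / (x₂ - x₁) * x₁ + (v.1 - x₁) / (x₂ - x₁) * x₂ = v.1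
    field_simp
    ring
  · change (x₂ - v.1) / (x₂ - x₁) * y₁ + (v.1 - x₁) / (x₂ - x₁) * y₂ ≤ v.2
    rw [div_mul_eq_mul_div, div_mul_eq_mul_div, ← add_div, div_le_iff₀' hpos]
    linarith

lemma volume_quadrant_diff_le (hconv : Convex ℝ Γ) (hup : IsUpperSet Γ) {a b x y : ℝ}
    (ha : (a, 0) ∈ Γ) (hb : (0, b) ∈ Γ) (hxy : (x, y) ∈ Γ) (hb₀ : 0 ≤ b) (hx₀ : 0 ≤ x)
    (hxa : x ≤ a) (hy₀ : 0 ≤ y) :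
    volume ({v : ℝ × ℝ | 0 ≤ v.1 ∧ 0 ≤ v.2} \ Γ) ≤ ENNReal.ofReal ((b * x + a * y) / 2) := by
  have hcover : {v : ℝ × ℝ | 0 ≤ v.1 ∧ 0 ≤ v.2} \ Γ ⊆ trapezoid 0 x b y ∪ trapezoid x a y 0 := by
    rintro v ⟨⟨hv₁, hv₂⟩, hv⟩
    have hva : v.1 < a := lt_of_not_ge fun hle => hv (hup (Prod.mk_le_mk.2 ⟨hle, hv₂⟩) ha)
    rcases lt_or_ge v.1 x with hvx | hvx
    · exact .inl (mem_trapezoid_of_notMem hconv hup (hv₁.trans_lt hvx) hb hxy hv ⟨hv₁, hvx.le⟩ hv₂)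
    · exact .inr (mem_trapezoid_of_notMem hconv hup (hvx.trans_lt hva) hxy ha hv ⟨hvx, hva.le⟩ hv₂)
  calc volume ({v : ℝ × ℝ | 0 ≤ v.1 ∧ 0 ≤ v.2} \ Γ)
      ≤ volume (trapezoid 0 x b y) + volume (trapezoid x a y 0) :=
        (measure_mono hcover).trans (measure_union_le _ _)
    _ = ENNReal.ofReal ((x - 0) * (b + y) / 2 + (a - x) * (y + 0) / 2) := by
        have := sub_nonneg.2 hxa
        rw [volume_trapezoid hx₀ hb₀ hy₀, volume_trapezoid hxa hy₀ le_rfl,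
          ENNReal.ofReal_add (by rw [sub_zero]; positivity) (by positivity)]
    _ = ENNReal.ofReal ((b * x + a * y) / 2) := by ring_nf

end ConvexUpperSet

section NewtonPolyhedron

variable {T : Finset (ℕ × ℕ)} {a b : ℕ}

lemma convex_gammaPlus (T : Finset (ℕ × ℕ)) : Convex ℝ (GammaPlus T) :=
  (convex_convexHull ℝ _).add (convex_Ici (0 : ℝ × ℝ))

lemma isUpperSet_gammaPlus (T : Finset (ℕ × ℕ)) : IsUpperSet (GammaPlus T) :=
  IsUpperSet.add_left (isUpperSet_Ici (0 : ℝ × ℝ))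

lemma natCast_mem_gammaPlus {v : ℕ × ℕ} (hv : v ∈ T) : ((v.1 : ℝ), (v.2 : ℝ)) ∈ GammaPlus T :=
  Set.mem_add.2 ⟨_, subset_convexHull ℝ _ ⟨v, hv, rfl⟩, 0, ⟨le_rfl, le_rfl⟩, add_zero _⟩

lemma le_of_mem_gammaPlus {α β c : ℝ} (hα : 0 ≤ α) (hβ : 0 ≤ β)
    (h : ∀ v ∈ T, c ≤ α * v.1 + β * v.2) {z : ℝ × ℝ} (hz : z ∈ GammaPlus T) :
    c ≤ α * z.1 + β * z.2 := by
  obtain ⟨u, hu, w, ⟨hw₁, hw₂⟩, rfl⟩ := Set.mem_add.1 hz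
  have hlin : IsLinearMap ℝ fun z : ℝ × ℝ => α * z.1 + β * z.2 :=
    (α • LinearMap.fst ℝ ℝ ℝ + β • LinearMap.snd ℝ ℝ ℝ).isLinear
  have hu : c ≤ α * u.1 + β * u.2 :=
    convexHull_min (by rintro _ ⟨v, hv, rfl⟩; exact h v hv) (convex_halfSpace_ge hlin c) hu
  calc c ≤ α * u.1 + β * u.2 + (α * w.1 + β * w.2) := le_add_of_le_of_nonneg hu (by positivity)
    _ = α * (u + w).1 + β * (u + w).2 := by simp only [Prod.fst_add, Prod.snd_add]; ring

lemma axisA_eq (ha : IsLeast {x | (x, 0) ∈ T} a) : axisA T = a := by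
  refine IsLeast.csInf_eq ⟨by simpa using natCast_mem_gammaPlus ha.1, fun x hx => ?_⟩
  have hle : ∀ v ∈ T, (a : ℝ) ≤ 1 * v.1 + a * v.2 := by
    rintro ⟨i, _ | j⟩ hv
    · simpa using ha.2 hv
    · push_cast
      nlinarith [mul_nonneg a.cast_nonneg (α := ℝ) j.cast_nonneg, i.cast_nonneg (α := ℝ)]
  simpa using le_of_mem_gammaPlus zero_le_one a.cast_nonneg hle hx

lemma axisB_eq (hb : IsLeast {y | (0, y) ∈ T} b) : axisB T = b := by
  refine IsLeast.csInf_eq ⟨by simpa using natCast_mem_gammaPlus hb.1, fun y hy => ?_⟩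
  have hle : ∀ v ∈ T, (b : ℝ) ≤ b * v.1 + 1 * v.2 := by
    rintro ⟨_ | i, j⟩ hv
    · simpa using hb.2 hv
    · push_cast
      nlinarith [mul_nonneg b.cast_nonneg (α := ℝ) i.cast_nonneg, j.cast_nonneg (α := ℝ)]
  simpa using le_of_mem_gammaPlus b.cast_nonneg zero_le_one hle hy

lemma volume_quadrant_diff_gammaPlus_le (ha : (a, 0) ∈ T) (hb : (0, b) ∈ T) {v : ℕ × ℕ}
    (hv : v ∈ T) (hva : v.1 ≤ a) :
    volume ({v : ℝ × ℝ | 0 ≤ v.1 ∧ 0 ≤ v.2} \ GammaPlus T) ≤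
      ENNReal.ofReal ((b * v.1 + a * v.2) / 2) :=
  volume_quadrant_diff_le (convex_gammaPlus T) (isUpperSet_gammaPlus T)
    (by simpa using natCast_mem_gammaPlus ha) (by simpa using natCast_mem_gammaPlus hb)
    (natCast_mem_gammaPlus hv) b.cast_nonneg v.1.cast_nonneg (by exact_mod_cast hva)
    v.2.cast_nonneg

lemma areaS_le (ha : (a, 0) ∈ T) (hb : (0, b) ∈ T) {v : ℕ × ℕ} (hv : v ∈ T) (hva : v.1 ≤ a) :
    areaS T ≤ (b * v.1 + a * v.2) / 2 :=
  ENNReal.toReal_le_of_le_ofReal (by positivity) (volume_quadrant_diff_gammaPlus_le ha hb hv hva)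

lemma areaS_le_triangle (ha : (a, 0) ∈ T) (hb : (0, b) ∈ T) : areaS T ≤ a * b / 2 := by
  simpa [mul_comm] using areaS_le ha hb ha le_rfl

lemma triangle_le_areaS (ha : (a, 0) ∈ T) (hb : (0, b) ∈ T)
    (h : ∀ v ∈ T, a * b ≤ b * v.1 + a * v.2) : a * b / 2 ≤ areaS T := by
  have hsub : trapezoid 0 a b 0 ⊆ {v : ℝ × ℝ | 0 ≤ v.1 ∧ 0 ≤ v.2} \ GammaPlus T := by
    rintro z ⟨⟨hz₁, -⟩, hz₂, hz⟩
    refine ⟨⟨hz₁, hz₂⟩, fun hzΓ => ?_⟩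
    have := le_of_mem_gammaPlus b.cast_nonneg a.cast_nonneg
      (fun v hv => by exact_mod_cast h v hv) (c := a * b) hzΓ
    linarith
  have hfin : volume ({v : ℝ × ℝ | 0 ≤ v.1 ∧ 0 ≤ v.2} \ GammaPlus T) ≠ ⊤ :=
    ne_top_of_le_ne_top ENNReal.ofReal_ne_top (volume_quadrant_diff_gammaPlus_le ha hb ha le_rfl)
  rw [areaS, ← ENNReal.ofReal_le_iff_le_toReal hfin]
  calc ENNReal.ofReal (a * b / 2) = volume (trapezoid 0 a b 0) := by
        rw [volume_trapezoid a.cast_nonneg b.cast_nonneg le_rfl, sub_zero, add_zero]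
    _ ≤ _ := measure_mono hsub

end NewtonPolyhedron

section NewtonNumber

variable {T : Finset (ℕ × ℕ)} {a b : ℕ}

lemma newtonNumber_le (ha : IsLeast {x | (x, 0) ∈ T} a) (hb : IsLeast {y | (0, y) ∈ T} b) :
    newtonNumber T ≤ (a - 1) * (b - 1) := by
  rw [newtonNumber, axisA_eq ha, axisB_eq hb]
  linarith [areaS_le_triangle ha.1 hb.1]

lemma newtonNumber_eq_of_forall_le (ha : IsLeast {x | (x, 0) ∈ T} a)
    (hb : IsLeast {y | (0, y) ∈ T} b) (h : ∀ v ∈ T, a * b ≤ b * v.1 + a * v.2) :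
    newtonNumber T = (a - 1) * (b - 1) := by
  refine (newtonNumber_le ha hb).antisymm ?_
  rw [newtonNumber, axisA_eq ha, axisB_eq hb]
  linarith [triangle_le_areaS ha.1 hb.1 h]

lemma mul_add_mul_add_gcd_le_of_lt {i j : ℕ} (h : b * i + a * j < a * b) :
    b * i + a * j + a.gcd b ≤ a * b := by
  have hga : a.gcd b ∣ a := Nat.gcd_dvd_left a b
  have hgb : a.gcd b ∣ b := Nat.gcd_dvd_right a b
  exact Nat.le_of_lt_add_of_dvd (by gcongr)
    (((hgb.mul_right i).add (hga.mul_right j)).add dvd_rfl) (hga.mul_right b)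

lemma newtonNumber_le_sub_gcd (ha : IsLeast {x | (x, 0) ∈ T} a)
    (hb : IsLeast {y | (0, y) ∈ T} b) {v : ℕ × ℕ} (hv : v ∈ T)
    (hlt : b * v.1 + a * v.2 < a * b) :
    newtonNumber T ≤ (a - 1) * (b - 1) - a.gcd b := by
  have hva : v.1 < a := by
    refine Nat.lt_of_mul_lt_mul_left (a := b) ?_
    calc b * v.1 ≤ b * v.1 + a * v.2 := Nat.le_add_right _ _
      _ < b * a := mul_comm a b ▸ hlt
  have hgcd : (b * v.1 + a * v.2 + a.gcd b : ℝ) ≤ a * b := by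
    exact_mod_cast mul_add_mul_add_gcd_le_of_lt hlt
  rw [newtonNumber, axisA_eq ha, axisB_eq hb]
  linarith [areaS_le ha.1 hb.1 hv hva.le]

lemma newtonNumber_eq_or_le_sub_gcd (ha : IsLeast {x | (x, 0) ∈ T} a)
    (hb : IsLeast {y | (0, y) ∈ T} b) :
    newtonNumber T = (a - 1) * (b - 1) ∨ newtonNumber T ≤ (a - 1) * (b - 1) - a.gcd b := by
  by_cases h : ∀ v ∈ T, a * b ≤ b * v.1 + a * v.2
  · exact .inl (newtonNumber_eq_of_forall_le ha hb h)
  · push Not at h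
    obtain ⟨v, hv, hlt⟩ := h
    exact .inr (newtonNumber_le_sub_gcd ha hb hv hlt)

lemma newtonNumber_eq_one_of_zero_mem (h : (0, 0) ∈ T) : newtonNumber T = 1 := by
  have hleast {s : Set ℕ} (hs : 0 ∈ s) : IsLeast s 0 := ⟨hs, fun _ _ => Nat.zero_le _⟩
  simpa using newtonNumber_eq_of_forall_le (hleast h) (hleast h) (by simp)

end NewtonNumber

lemma pred_mul_pred_le_sub_min {a b p q : ℕ} (ha : 0 < a) (hb : 0 < b) (hap : a ≤ p)
    (hbq : b ≤ q) (hne : a ≠ p ∨ b ≠ q) :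
    ((a : ℝ) - 1) * (b - 1) ≤ (p - 1) * (q - 1) - min ((p : ℝ) - 1) (q - 1) := by
  have ha' : (1 : ℝ) ≤ a := by exact_mod_cast ha
  have hb' : (1 : ℝ) ≤ b := by exact_mod_cast hb
  have hap' : (a : ℝ) ≤ p := by exact_mod_cast hap
  have hbq' : (b : ℝ) ≤ q := by exact_mod_cast hbq
  rcases hne with hne | hne
  · have hlt : (a : ℝ) + 1 ≤ p := by exact_mod_cast hap.lt_of_ne hne
    nlinarith [min_le_right ((p : ℝ) - 1) (q - 1)]
  · have hlt : (b : ℝ) + 1 ≤ q := by exact_mod_cast hbq.lt_of_ne hne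
    nlinarith [min_le_left ((p : ℝ) - 1) (q - 1)]

lemma one_eq_or_le_sub_min {p q : ℕ} (hp : 2 ≤ p) (hq : 2 ≤ q) :
    (1 : ℝ) = (p - 1) * (q - 1) ∨
      (1 : ℝ) ≤ (p - 1) * (q - 1) - min ((p : ℝ) - 1) (q - 1) := by
  by_cases h : p = 2 ∧ q = 2
  · left
    norm_num [h.1, h.2]
  · right
    calc (1 : ℝ) ≤ ((2 : ℕ) - 1) * ((2 : ℕ) - 1) := by norm_num
      _ ≤ _ := pred_mul_pred_le_sub_min two_pos two_pos hp hq (by omega)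

theorem stmt_3_general {T : Finset (ℕ × ℕ)} {p q : ℕ} (hp : 2 ≤ p) (hq : 2 ≤ q)
    (hpT : (p, 0) ∈ T) (hqT : (0, q) ∈ T) :
    newtonNumber T = (p - 1) * (q - 1) ∨
      newtonNumber T ≤
        (p - 1) * (q - 1) - min (p.gcd q : ℝ) (min ((p : ℝ) - 1) (q - 1)) := by
  have weaken : newtonNumber T ≤ (p - 1) * (q - 1) - min ((p : ℝ) - 1) (q - 1) →
      newtonNumber T ≤ (p - 1) * (q - 1) - min (p.gcd q : ℝ) (min ((p : ℝ) - 1) (q - 1)) :=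
    fun h => h.trans (sub_le_sub_left (min_le_right _ _) _)
  by_cases h₀ : (0, 0) ∈ T
  · rw [newtonNumber_eq_one_of_zero_mem h₀] at weaken ⊢
    exact (one_eq_or_le_sub_min hp hq).imp_right weaken
  obtain ⟨a, ha⟩ : ∃ a, IsLeast {x | (x, 0) ∈ T} a := ⟨_, isLeast_csInf ⟨p, hpT⟩⟩
  obtain ⟨b, hb⟩ : ∃ b, IsLeast {y | (0, y) ∈ T} b := ⟨_, isLeast_csInf ⟨q, hqT⟩⟩
  by_cases hab : a = p ∧ b = q
  · obtain ⟨rfl, rfl⟩ := hab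
    exact (newtonNumber_eq_or_le_sub_gcd ha hb).imp_right
      fun h => h.trans (sub_le_sub_left (min_le_left _ _) _)
  · have ha₀ : 0 < a := Nat.pos_of_ne_zero fun h => h₀ (h ▸ ha.1)
    have hb₀ : 0 < b := Nat.pos_of_ne_zero fun h => h₀ (h ▸ hb.1)
    exact .inr <| weaken <| (newtonNumber_le ha hb).trans <|
      pred_mul_pred_le_sub_min ha₀ hb₀ (ha.2 hpT) (hb.2 hqT) (not_and_or.1 hab)

/-- the first jump of Newton numbers of `tr(p,q)` equals
`m = gcd(p,q)` when `m < p`: no value strictly between `ν - m` and `ν` occurs. -/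
theorem stmt_3 (p q m : ℕ) (ν : ℤ)
    (hp : 2 ≤ p) (hpq : p ≤ q) (hm : m = Nat.gcd p q) (hmp : m < p)
    (hν : ν = ((p : ℤ) - 1) * ((q : ℤ) - 1)) :
    ∀ P : Finset (ℕ × ℕ),
      newtonNumber ({(p, 0), (0, q)} ∪ P) = (ν : ℝ) ∨
      newtonNumber ({(p, 0), (0, q)} ∪ P) ≤ (ν : ℝ) - (m : ℝ) := by
  intro P
  have hm_le : (m : ℝ) ≤ min ((p : ℝ) - 1) (q - 1) :=
    le_min (le_sub_iff_add_le.2 (by exact_mod_cast hmp))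
      (le_sub_iff_add_le.2 (by exact_mod_cast hmp.trans_le hpq))
  have h := stmt_3_general hp (hp.trans hpq)
    (T := {(p, 0), (0, q)} ∪ P) (by simp) (by simp)
  rw [← hm, min_eq_left hm_le] at h
  simpa [hν] using h
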